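/- arXiv:1112.5015 — 2 statements merged into one kernel-verified Lean document; each statement's English description precedes it below -/
import Mathlib

section
/- Let K be a field of characteristic 0, let A be a Cohen-Macaulay standard graded K-algebra of Krull dimension d, let Θ = θ_1,…,θ_d be a linear system of parameters for A, let r ≥ 1 be an integer and set s = ⌊(r−1)d/r⌋. Then the Artinian algebra A_Θ^⟨r⟩ has the s-Lefschetz property; in fact w = (θ_1 + ⋯ + θ_d)^r is an s-Lefschetz element. -/
/-- The degree-`i` component of the ideal `(θ₁^r, …, θ_d^r) A^⟨r⟩` of the `r`-th Veronese
subalgebra `A^⟨r⟩ = ⊕_i A_{ir}`, viewed as a `K`-submodule of `A`: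
it is `0` in degree `0` and `θ₁^r A_{ir} + ⋯ + θ_d^r A_{ir}` in degree `i+1`.
The degree-`i` component of `A_Θ^⟨r⟩ = A^⟨r⟩/(θ₁^r, …, θ_d^r)A^⟨r⟩` is then
`𝒜 (i*r) ⧸ veroneseLsopIdealComponent K 𝒜 θ r i`. -/
noncomputable def veroneseLsopIdealComponent (K : Type*) {A : Type*} [CommRing K] [CommRing A]
    [Algebra K A] (𝒜 : ℕ → Submodule K A) {d : ℕ} (θ : Fin d → A) (r : ℕ) :
    ℕ → Submodule K A
  | 0 => ⊥
  | (i + 1) => ⨆ j : Fin d, Submodule.map (LinearMap.mulLeft K (θ j ^ r)) (𝒜 (i * r))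

/-!
Let `I` be generated by a regular sequence `θ` and let `J = (θ_j ^ (a_j + 1))_j`. Regular sequences
are quasi-regular (Rees): the associated graded ring of `I` is the polynomial ring `(A/I)[X]`.
Comparing leading forms, multiplication by `(∑ θ_j) ^ m` modulo `J` becomes multiplication by
`(∑ X_j) ^ m` on the monomial complete intersection `(A/I)[X] / (X_j ^ (a_j + 1))`, which is
injective in degree `n` when `2 n + m ≤ ∑ a_j` because of its `sl₂`-action. Raising the order one
step at a time, `(∑ θ_j) ^ m * x ∈ J` gives `x ∈ J + I ^ (n + 1)`; if moreover `x` is homogeneous of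
degree `n` and the `θ_j` have degree `1`, the second summand contributes nothing, so `x ∈ J`. The
Veronese statement is the case `a_j = r - 1`.
-/

section PowerIdeal

variable {σ A B : Type*} [CommRing A] [CommRing B]

/-- The ideal `(x_j ^ (a_j + 1) : j ∈ σ)`. The shift makes `a_j` the largest exponent of `x_j`
that survives modulo the ideal. -/
def powerIdeal (x : σ → A) (a : σ → ℕ) : Ideal A :=
  Ideal.span (Set.range fun j => x j ^ (a j + 1))

theorem pow_mem_powerIdeal (x : σ → A) (a : σ → ℕ) (j : σ) :
    x j ^ (a j + 1) ∈ powerIdeal x a :=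
  Ideal.subset_span ⟨j, rfl⟩

theorem map_powerIdeal (f : A →+* B) (x : σ → A) (a : σ → ℕ) :
    (powerIdeal x a).map f = powerIdeal (f ∘ x) a := by
  simp only [powerIdeal, Ideal.map_span, ← Set.range_comp, Function.comp_def, map_pow]

open MvPolynomial in
theorem mem_powerIdeal_X_iff {a : σ → ℕ} {F : MvPolynomial σ A} :
    F ∈ powerIdeal X a ↔ ∀ m ∈ F.support, ∃ j, a j + 1 ≤ m j := by
  have h : (Set.range fun j => (X j : MvPolynomial σ A) ^ (a j + 1)) =
      (fun m => monomial m 1) '' Set.range fun j => Finsupp.single j (a j + 1) := by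
    simp only [← Set.range_comp, Function.comp_def, X_pow_eq_monomial]
  simp only [powerIdeal, h, mem_ideal_span_monomial_image, Set.exists_range_iff,
    Finsupp.single_le_iff]

end PowerIdeal

open MvPolynomial in
theorem eq_C_of_isHomogeneous_zero {σ R : Type*} [CommSemiring R] {f : MvPolynomial σ R}
    (hf : f.IsHomogeneous 0) : f = C (coeff 0 f) :=
  totalDegree_eq_zero_iff_eq_C.mp (Nat.le_zero.mp hf.totalDegree_le)

section Lefschetz

open MvPolynomial

variable {σ R : Type*} [Fintype σ] [CommRing R] {a : σ → ℕ} {f : MvPolynomial σ R} {e m : ℕ}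

/-- The lowering operator of the `sl₂`-action on the monomial complete intersection
`R[x]/(x_j ^ (a_j + 1))` whose raising operator is multiplication by `∑ x_j`. -/
noncomputable def lowering (a : σ → ℕ) : MvPolynomial σ R →ₗ[R] MvPolynomial σ R :=
  ∑ j, (a j • (pderiv j).toLinearMap -
    LinearMap.mulLeft R (X j) ∘ₗ (pderiv j).toLinearMap ∘ₗ (pderiv j).toLinearMap)

theorem lowering_apply (a : σ → ℕ) (f : MvPolynomial σ R) :
    lowering a f = ∑ j, (a j • pderiv j f - X j * pderiv j (pderiv j f)) := by
  simp [lowering]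

theorem pderiv_sum_X (j : σ) : pderiv j (∑ i, X i : MvPolynomial σ R) = 1 := by
  classical
  simp [pderiv_X, Pi.single_apply]

theorem isHomogeneous_sum_X : (∑ i, X i : MvPolynomial σ R).IsHomogeneous 1 :=
  IsHomogeneous.sum _ _ _ fun i _ => isHomogeneous_X R i

theorem lowering_sum_X_mul (hf : f.IsHomogeneous e) :
    lowering a ((∑ i, X i) * f) =
      (∑ i, X i) * lowering a f + ((∑ j, a j : ℕ) - 2 * e : ℤ) • f := by
  have euler : ∑ j, X j * pderiv j f = e • f := hf.sum_X_mul_pderiv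
  have commutator (j : σ) :
      a j • pderiv j ((∑ i, X i) * f) - X j * pderiv j (pderiv j ((∑ i, X i) * f)) =
        (∑ i, X i) * (a j • pderiv j f - X j * pderiv j (pderiv j f)) +
          a j • f - 2 * (X j * pderiv j f) := by
    simp only [Derivation.leibniz, pderiv_sum_X, smul_eq_mul, map_add, mul_one, nsmul_eq_mul]
    ring
  rw [lowering_apply, Finset.sum_congr rfl fun j _ => commutator j, Finset.sum_sub_distrib,
    Finset.sum_add_distrib, ← Finset.mul_sum, ← Finset.mul_sum, ← Finset.sum_smul, euler,
    ← lowering_apply]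
  simp only [nsmul_eq_mul, zsmul_eq_mul]
  push_cast
  ring

theorem lowering_sum_X_pow_mul (hf : f.IsHomogeneous e) (m : ℕ) :
    lowering a ((∑ i, X i) ^ (m + 1) * f) = (∑ i, X i) ^ (m + 1) * lowering a f +
      ((m + 1) * ((∑ j, a j : ℕ) - 2 * e - m) : ℤ) • ((∑ i, X i) ^ m * f) := by
  induction m with
  | zero => simpa using lowering_sum_X_mul hf
  | succ m ih =>
    have hom : ((∑ i, X i) ^ (m + 1) * f).IsHomogeneous (m + 1 + e) := by
      simpa using (isHomogeneous_sum_X.pow (m + 1)).mul hf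
    rw [pow_succ' _ (m + 1), mul_assoc, lowering_sum_X_mul hom, ih]
    simp only [zsmul_eq_mul]
    push_cast
    ring

theorem lowering_eq_zero_of_isHomogeneous_zero (hf : f.IsHomogeneous 0) : lowering a f = 0 := by
  rw [eq_C_of_isHomogeneous_zero hf]
  simp [lowering_apply]

theorem lowering_isHomogeneous (hf : f.IsHomogeneous (e + 1)) :
    (lowering a f).IsHomogeneous e := by
  rw [lowering_apply]
  refine IsHomogeneous.sum _ _ _ fun j _ => ?_
  have hom : (pderiv j f).IsHomogeneous e := hf.pderiv
  refine .sub (((homogeneousSubmodule σ R e).nsmul_mem hom _)) ?_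
  cases e with
  | zero =>
    rw [eq_C_of_isHomogeneous_zero hom, pderiv_C, mul_zero]
    exact isHomogeneous_zero _ _ _
  | succ e => simpa [add_comm] using (isHomogeneous_X R j).mul hom.pderiv

theorem lowering_mem_powerIdeal (hf : f ∈ powerIdeal X a) : lowering a f ∈ powerIdeal X a := by
  classical
  obtain ⟨c, rfl⟩ := Ideal.mem_span_range_iff_exists_fun.mp hf
  rw [map_sum]
  refine sum_mem fun k _ => ?_
  rw [lowering_apply]
  refine sum_mem fun j _ => ?_
  have multiple (g : MvPolynomial σ R) : g * X k ^ (a k + 1) ∈ powerIdeal X a :=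
    Ideal.mul_mem_left _ _ (pow_mem_powerIdeal X a k)
  obtain rfl | hjk := eq_or_ne j k
  · convert multiple (a j • pderiv j (c j) - X j * pderiv j (pderiv j (c j)) -
      2 * (a j + 1) • pderiv j (c j)) using 1
    rcases a j with _ | q
    · simp only [zero_add, pow_one, Derivation.leibniz, pderiv_X, Pi.single_eq_same, smul_eq_mul,
        mul_one, zero_nsmul, map_add, zero_sub, one_smul]
      ring
    · simp only [Derivation.leibniz, Derivation.leibniz_pow, add_tsub_cancel_right, pderiv_X,
        Pi.single_eq_same, smul_eq_mul, mul_one, nsmul_eq_mul, Nat.cast_add, Nat.cast_one, smul_add,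
        map_add, Derivation.map_natCast, Derivation.map_one_eq_zero, add_zero, mul_zero]
      ring
  · have pderiv_mul (g : MvPolynomial σ R) :
        pderiv j (g * X k ^ (a k + 1)) = pderiv j g * X k ^ (a k + 1) := by
      simp [Derivation.leibniz, Derivation.leibniz_pow, pderiv_X_of_ne hjk.symm, mul_comm]
    rw [pderiv_mul, pderiv_mul, ← smul_mul_assoc, ← mul_assoc, ← sub_mul]
    exact multiple _

theorem sum_X_pow_succ_mul_lowering_mem (hf : f.IsHomogeneous e)
    (h : (∑ i, X i) ^ m * f ∈ powerIdeal X a) :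
    (∑ i, X i) ^ (m + 1) * lowering a f ∈ powerIdeal X a := by
  have hL : (∑ i, X i) ^ (m + 1) * f ∈ powerIdeal X a := by
    rw [pow_succ', mul_assoc]
    exact Ideal.mul_mem_left _ _ h
  have hE := lowering_mem_powerIdeal hL
  rw [lowering_sum_X_pow_mul hf] at hE
  exact (Ideal.add_mem_iff_left _ (zsmul_mem h _)).mp hE

variable [Algebra ℚ R]

theorem mem_of_zsmul_mem {I : Ideal R} {z : ℤ} {x : R} (hz : z ≠ 0) (h : z • x ∈ I) : x ∈ I :=
  ((I.restrictScalars ℚ).smul_mem_iff (Int.cast_ne_zero.mpr hz : (z : ℚ) ≠ 0)).mp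
    ((Int.cast_smul_eq_zsmul ℚ z x).symm ▸ h)

/- If the lowering operator kills `f`, it takes the raised vector `(∑ X_i) ^ (m + 1) f` to
`(m + 1) (∑ a_j - 2 e - m)` times `(∑ X_i) ^ m f`, and this scalar is nonzero in the stated
range. -/
theorem mem_powerIdeal_of_lowering_mem (hf : f.IsHomogeneous e)
    (hE : lowering a f ∈ powerIdeal X a) (hm : 2 * e + m ≤ ∑ j, a j)
    (h : (∑ i, X i) ^ m * f ∈ powerIdeal X a) : f ∈ powerIdeal X a := by
  induction m with
  | zero => simpa using h
  | succ m ih =>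
    refine ih (by lia) ?_
    have hlow := lowering_mem_powerIdeal h
    rw [lowering_sum_X_pow_mul hf,
      Ideal.add_mem_iff_right _ (Ideal.mul_mem_left _ _ hE)] at hlow
    exact mem_of_zsmul_mem (mul_ne_zero (by lia) (by lia)) hlow

theorem mem_powerIdeal_of_sum_X_pow_mul_mem (hf : f.IsHomogeneous e)
    (hm : 2 * e + m ≤ ∑ j, a j) (h : (∑ i, X i) ^ m * f ∈ powerIdeal X a) :
    f ∈ powerIdeal X a := by
  induction e generalizing f m with
  | zero =>
    refine mem_powerIdeal_of_lowering_mem hf ?_ hm h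
    simp [lowering_eq_zero_of_isHomogeneous_zero hf]
  | succ e ih =>
    exact mem_powerIdeal_of_lowering_mem hf
      (ih (lowering_isHomogeneous hf) (by lia) (sum_X_pow_succ_mul_lowering_mem hf h)) hm h

end Lefschetz

section QuasiRegular

open MvPolynomial

variable {σ A : Type*} [CommRing A] {θ : σ → A} {F : MvPolynomial σ A} {n : ℕ}

/-- The family `θ`, generating the ideal `I`, is quasi-regular when forms whose value at `θ` is
smaller than their degree predicts have all their coefficients in `I`; equivalently, the canonical
map `(A/I)[X] → gr_I A` is injective. -/
def IsQuasiRegular (θ : σ → A) : Prop :=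
  ∀ ⦃n : ℕ⦄ ⦃F : MvPolynomial σ A⦄, F.IsHomogeneous n →
    eval θ F ∈ Ideal.span (Set.range θ) ^ (n + 1) → F ∈ (Ideal.span (Set.range θ)).map C

theorem mem_pow_idealOfVars_of_isHomogeneous (hF : F.IsHomogeneous n) : F ∈ idealOfVars σ A ^ n :=
  (mem_pow_idealOfVars_iff n F).mpr fun _ hm => (hF.degree_eq_sum_deg_support hm).le

theorem eval_mem_span_pow (hF : F ∈ idealOfVars σ A ^ n) :
    eval θ F ∈ Ideal.span (Set.range θ) ^ n := by
  have map_vars : (idealOfVars σ A).map (eval θ) = Ideal.span (Set.range θ) := by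
    simp only [idealOfVars, Ideal.map_span, ← Set.range_comp, Function.comp_def, eval_X]
  rw [← map_vars, ← Ideal.map_pow]
  exact Ideal.mem_map_of_mem _ hF

theorem exists_isHomogeneous_succ_of_mem_map_C (hF : F.IsHomogeneous n)
    (hFI : F ∈ (Ideal.span (Set.range θ)).map C) :
    ∃ G ∈ Ideal.span ((monomial · 1) '' (F.support : Set (σ →₀ ℕ))),
      G.IsHomogeneous (n + 1) ∧ eval θ G = eval θ F := by
  choose L hL hLeval using fun m =>
    (Ideal.mem_span_iff_exists_isHomogeneous θ _).mp (mem_map_C_iff.mp hFI m)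
  refine ⟨∑ m ∈ F.support, L m * monomial m 1, ?_, ?_, ?_⟩
  · exact sum_mem fun m hm => Ideal.mul_mem_left _ _ (Ideal.subset_span ⟨m, hm, rfl⟩)
  · refine IsHomogeneous.sum _ _ _ fun m hm => ?_
    rw [add_comm]
    exact (hL m).mul (isHomogeneous_monomial _ (hF.degree_eq_sum_deg_support hm).symm)
  · conv_rhs => rw [F.as_sum]
    simp only [map_sum, map_mul, hLeval, eval_monomial, one_mul]

theorem eval_mem_span_pow_succ (hF : F.IsHomogeneous n)
    (hFI : F ∈ (Ideal.span (Set.range θ)).map C) :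
    eval θ F ∈ Ideal.span (Set.range θ) ^ (n + 1) := by
  obtain ⟨G, -, hG, hGF⟩ := exists_isHomogeneous_succ_of_mem_map_C hF hFI
  exact hGF ▸ eval_mem_span_pow (mem_pow_idealOfVars_of_isHomogeneous hG)

theorem exists_mem_map_C_of_mem_span_pow_succ {y : A}
    (hy : y ∈ Ideal.span (Set.range θ) ^ (n + 1)) :
    ∃ F : MvPolynomial σ A, F.IsHomogeneous n ∧ F ∈ (Ideal.span (Set.range θ)).map C ∧
      eval θ F = y := by
  rw [pow_succ'] at hy
  refine Submodule.mul_induction_on hy (fun c hc z hz => ?_) ?_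
  · obtain ⟨F, hF, rfl⟩ := (Ideal.mem_span_pow_iff_exists_isHomogeneous θ z).mp hz
    exact ⟨C c * F, hF.C_mul c, Ideal.mul_mem_right _ _ (Ideal.mem_map_of_mem C hc), by simp⟩
  · rintro _ _ ⟨F, hF, hFI, rfl⟩ ⟨G, hG, hGI, rfl⟩
    exact ⟨F + G, hF.add hG, add_mem hFI hGI, map_add _ _ _⟩

theorem mem_map_C_of_eval_mem_span_pow_succ
    (h : ∀ G : MvPolynomial σ A, G.IsHomogeneous n → eval θ G = 0 →
      G ∈ (Ideal.span (Set.range θ)).map C)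
    (hF : F.IsHomogeneous n) (hFθ : eval θ F ∈ Ideal.span (Set.range θ) ^ (n + 1)) :
    F ∈ (Ideal.span (Set.range θ)).map C := by
  obtain ⟨G, hG, hGI, hGF⟩ := exists_mem_map_C_of_mem_span_pow_succ hFθ
  rw [← sub_add_cancel F G]
  exact add_mem (h _ (hF.sub hG) (by rw [map_sub, hGF, sub_self])) hGI

theorem IsQuasiRegular.mem_pow_of_mul_mem_pow (hθ : IsQuasiRegular θ) {x : A}
    (hx : ∀ y, x * y ∈ Ideal.span (Set.range θ) → y ∈ Ideal.span (Set.range θ)) (n : ℕ) :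
    ∀ y, x * y ∈ Ideal.span (Set.range θ) ^ n → y ∈ Ideal.span (Set.range θ) ^ n := by
  induction n with
  | zero => simp
  | succ n ih =>
    intro y hxy
    obtain ⟨F, hF, rfl⟩ := (Ideal.mem_span_pow_iff_exists_isHomogeneous θ y).mp
      (ih y (Ideal.pow_le_pow_right n.le_succ hxy))
    have hxF : C x * F ∈ (Ideal.span (Set.range θ)).map C := hθ (hF.C_mul x) (by simpa using hxy)
    refine eval_mem_span_pow_succ hF (mem_map_C_iff.mpr fun m => hx _ ?_)
    simpa using mem_map_C_iff.mp hxF m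

theorem rename_mem_map_C {τ : Type*} (f : σ → τ) {I : Ideal A} (hF : F ∈ I.map C) :
    rename f F ∈ I.map C := by
  have hC : (rename f : MvPolynomial σ A →ₐ[A] MvPolynomial τ A).toRingHom.comp C = C :=
    RingHom.ext (rename_C f)
  rw [← hC, ← Ideal.map_map]
  exact Ideal.mem_map_of_mem _ hF

theorem exists_eq_rename_castSucc_add_X_last_mul {d : ℕ} {F : MvPolynomial (Fin (d + 1)) A}
    (hF : F.IsHomogeneous (n + 1)) :
    ∃ G H, G.IsHomogeneous (n + 1) ∧ H.IsHomogeneous n ∧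
      F = rename Fin.castSucc G + X (Fin.last d) * H := by
  let S := F.modMonomial (Finsupp.single (Fin.last d) 1)
  let H := F.divMonomial (Finsupp.single (Fin.last d) 1)
  have hFSH : S + X (Fin.last d) * H = F := modMonomial_add_divMonomial_single F (Fin.last d)
  have hH : H.IsHomogeneous n := by
    intro m hm
    rw [coeff_divMonomial] at hm
    have hdeg := hF hm
    rw [map_add, Finsupp.weight_single, Pi.one_apply, smul_eq_mul, mul_one] at hdeg
    lia
  have hS : S.IsHomogeneous (n + 1) := by
    rw [eq_sub_of_add_eq hFSH]
    exact hF.sub (add_comm n 1 ▸ (isHomogeneous_X A _).mul hH)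
  have hvars : ↑S.vars ⊆ Set.range (Fin.castSucc : Fin d → Fin (d + 1)) := by
    intro i hi
    obtain ⟨m, hm, him⟩ := (mem_vars_iff_mem_support i).mp hi
    rcases i.eq_castSucc_or_eq_last with ⟨j, rfl⟩ | rfl
    · exact ⟨j, rfl⟩
    · refine absurd (coeff_modMonomial_of_le F ?_) (mem_support_iff.mp hm)
      exact Finsupp.single_le_iff.mpr (Nat.one_le_iff_ne_zero.mpr (Finsupp.mem_support_iff.mp him))
  obtain ⟨G, hG⟩ := exists_rename_eq_of_vars_subset_range S _ (Fin.castSucc_injective d) hvars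
  refine ⟨G, H, ?_, hH, by rw [hG, hFSH]⟩
  rwa [← hG, IsHomogeneous.rename_isHomogeneous_iff (Fin.castSucc_injective d)] at hS

theorem IsQuasiRegular.of_castSucc {d : ℕ} {θ : Fin (d + 1) → A}
    (hθ : IsQuasiRegular (θ ∘ Fin.castSucc))
    (hlast : ∀ y, θ (Fin.last d) * y ∈ Ideal.span (Set.range (θ ∘ Fin.castSucc)) →
      y ∈ Ideal.span (Set.range (θ ∘ Fin.castSucc))) :
    IsQuasiRegular θ := by
  set I' := Ideal.span (Set.range (θ ∘ Fin.castSucc))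
  have hle : I' ≤ Ideal.span (Set.range θ) :=
    Ideal.span_mono (Set.range_comp_subset_range _ _)
  suffices relations : ∀ n, ∀ F : MvPolynomial (Fin (d + 1)) A, F.IsHomogeneous n →
      eval θ F = 0 → F ∈ (Ideal.span (Set.range θ)).map C from
    fun n _ => mem_map_C_of_eval_mem_span_pow_succ (relations n)
  intro n
  induction n with
  | zero =>
    intro F hF hFθ
    rw [eq_C_of_isHomogeneous_zero hF, eval_C] at hFθ
    rw [eq_C_of_isHomogeneous_zero hF, hFθ, C_0]
    exact zero_mem _
  | succ n ih =>
    intro F hF hFθ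
    obtain ⟨G, H, hG, hH, rfl⟩ := exists_eq_rename_castSucc_add_X_last_mul hF
    rw [map_add, map_mul, eval_X, eval_rename] at hFθ
    have hGpow : eval (θ ∘ Fin.castSucc) G ∈ I' ^ (n + 1) :=
      eval_mem_span_pow (mem_pow_idealOfVars_of_isHomogeneous hG)
    have hHpow : eval θ H ∈ I' ^ (n + 1) := by
      refine hθ.mem_pow_of_mul_mem_pow hlast _ _ ?_
      rw [eq_neg_of_add_eq_zero_right hFθ]
      exact neg_mem hGpow
    have hHI : H ∈ (Ideal.span (Set.range θ)).map C :=
      mem_map_C_of_eval_mem_span_pow_succ ih hH (Ideal.pow_right_mono hle _ hHpow)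
    obtain ⟨H', hH', hH'H⟩ := (Ideal.mem_span_pow_iff_exists_isHomogeneous _ _).mp hHpow
    have hGH' : G + C (θ (Fin.last d)) * H' ∈ I'.map C := by
      refine hθ (hG.add (hH'.C_mul _)) ?_
      rw [map_add, map_mul, eval_C, hH'H, hFθ]
      exact zero_mem _
    have hGI : rename Fin.castSucc G ∈ (Ideal.span (Set.range θ)).map C := by
      have hlastI : C (θ (Fin.last d)) * H' ∈ (Ideal.span (Set.range θ)).map C :=
        Ideal.mul_mem_right _ _ (Ideal.mem_map_of_mem C (Ideal.subset_span ⟨_, rfl⟩))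
      have hG : G ∈ (Ideal.span (Set.range θ)).map C :=
        (Ideal.add_mem_iff_left _ hlastI).mp (Ideal.map_mono hle hGH')
      exact rename_mem_map_C _ hG
    exact add_mem hGI (Ideal.mul_mem_left _ _ hHI)

theorem isQuasiRegular_of_isWeaklyRegular {d : ℕ} {θ : Fin d → A}
    (hθ : RingTheory.Sequence.IsWeaklyRegular A (List.ofFn θ)) : IsQuasiRegular θ := by
  induction d with
  | zero =>
    intro n F hF hFθ
    obtain ⟨c, rfl⟩ := C_surjective (Fin 0) F
    have hc : c = 0 := by simpa using hFθ
    simp [hc]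
  | succ d ih =>
    rw [List.ofFn_succ', List.concat_eq_append,
      RingTheory.Sequence.isWeaklyRegular_append_iff,
      RingTheory.Sequence.isWeaklyRegular_singleton_iff] at hθ
    refine (ih hθ.1).of_castSucc fun y hy => ?_
    have hmem := isSMulRegular_quotient_iff_mem_of_smul_mem _ _ |>.mp hθ.2 y
    simp only [Ideal.ofList, List.mem_ofFn', smul_eq_mul, Ideal.mul_top] at hmem
    exact hmem hy

end QuasiRegular

section LeadingForms

open MvPolynomial

variable {σ A : Type*} [CommRing A] {θ : σ → A} {a : σ → ℕ} {F : MvPolynomial σ A} {n m : ℕ}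

theorem homogeneousComponent_mem_powerIdeal (hF : F ∈ powerIdeal X a) (n : ℕ) :
    homogeneousComponent n F ∈ powerIdeal X a := by
  rw [mem_powerIdeal_X_iff] at hF ⊢
  intro m hm
  rw [support_homogeneousComponent] at hm
  exact hF m (Finset.mem_filter.mp hm).1

theorem homogeneousComponent_mem_map_C {I : Ideal A} (hF : F ∈ I.map C) (n : ℕ) :
    homogeneousComponent n F ∈ I.map C := by
  rw [mem_map_C_iff] at hF ⊢
  intro m
  rw [coeff_homogeneousComponent]
  split_ifs
  exacts [hF m, zero_mem _]

theorem sub_homogeneousComponent_mem_pow_idealOfVars (hF : F ∈ idealOfVars σ A ^ n) :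
    F - homogeneousComponent n F ∈ idealOfVars σ A ^ (n + 1) := by
  rw [mem_pow_idealOfVars_iff] at hF ⊢
  intro m hm
  rw [mem_support_iff, coeff_sub, coeff_homogeneousComponent] at hm
  by_cases hmn : m.degree = n
  · simp [hmn] at hm
  · have hmF : m ∈ F.support := by simpa [hmn] using hm
    exact Nat.lt_of_le_of_ne (hF m hmF) (Ne.symm hmn)

theorem map_eval_powerIdeal_X : (powerIdeal X a).map (eval θ) = powerIdeal θ a := by
  rw [map_powerIdeal]
  congr 1
  exact funext fun j => eval_X j

theorem span_monomial_support_le_powerIdeal (hF : F ∈ powerIdeal X a) :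
    Ideal.span ((monomial · 1) '' (F.support : Set (σ →₀ ℕ))) ≤
      (powerIdeal X a : Ideal (MvPolynomial σ A)) := by
  rw [Ideal.span_le]
  rintro _ ⟨m, hm, rfl⟩
  refine mem_powerIdeal_X_iff.mpr fun k hk => ?_
  rw [Finset.mem_singleton.mp (support_monomial_subset hk)]
  exact mem_powerIdeal_X_iff.mp hF m hm

/- If `F` represents `y` and `y ∈ I ^ (n + 1)`, the degree-`n` part of `F` has coefficients in `I`.
Expanding these in `θ` raises its degree, and stays in the monomial ideal because only multiples of
the monomials already present occur. -/
theorem IsQuasiRegular.exists_mem_powerIdeal_X (hθ : IsQuasiRegular θ) {y : A}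
    (hya : y ∈ powerIdeal θ a) (hyn : y ∈ Ideal.span (Set.range θ) ^ n) :
    ∃ F ∈ powerIdeal X a, F ∈ idealOfVars σ A ^ n ∧ eval θ F = y := by
  induction n with
  | zero =>
    rw [← map_eval_powerIdeal_X] at hya
    obtain ⟨F, hF, rfl⟩ := (Ideal.mem_map_iff_of_surjective _ (fun c => ⟨C c, eval_C c⟩)).mp hya
    exact ⟨F, hF, by simp, rfl⟩
  | succ n ih =>
    obtain ⟨F, hFa, hFn, rfl⟩ := ih (Ideal.pow_le_pow_right n.le_succ hyn)
    have hrest := sub_homogeneousComponent_mem_pow_idealOfVars hFn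
    have hlead : homogeneousComponent n F ∈ (Ideal.span (Set.range θ)).map C := by
      refine hθ (homogeneousComponent_isHomogeneous n F) ?_
      have hvalue := sub_mem hyn (eval_mem_span_pow (θ := θ) hrest)
      rwa [← map_sub, sub_sub_cancel] at hvalue
    obtain ⟨G, hGspan, hG, hGF⟩ :=
      exists_isHomogeneous_succ_of_mem_map_C (homogeneousComponent_isHomogeneous n F) hlead
    have hleada := homogeneousComponent_mem_powerIdeal hFa n
    refine ⟨F - homogeneousComponent n F + G, add_mem (sub_mem hFa hleada)
      (span_monomial_support_le_powerIdeal hleada hGspan),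
      add_mem hrest (mem_pow_idealOfVars_of_isHomogeneous hG), ?_⟩
    rw [map_add, hGF, ← map_add, sub_add_cancel]

theorem IsQuasiRegular.mem_powerIdeal_X_sup_map_C (hθ : IsQuasiRegular θ) (hF : F.IsHomogeneous n)
    (h : eval θ F ∈ powerIdeal θ a) :
    F ∈ powerIdeal X a ⊔ (Ideal.span (Set.range θ)).map C := by
  obtain ⟨G, hGa, hGn, hGF⟩ := hθ.exists_mem_powerIdeal_X h
    (eval_mem_span_pow (mem_pow_idealOfVars_of_isHomogeneous hF))
  have hdiff : F - homogeneousComponent n G ∈ (Ideal.span (Set.range θ)).map C := by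
    refine hθ (hF.sub (homogeneousComponent_isHomogeneous n G)) ?_
    rw [map_sub, ← hGF, ← map_sub]
    exact eval_mem_span_pow (sub_homogeneousComponent_mem_pow_idealOfVars hGn)
  rw [← add_sub_cancel (homogeneousComponent n G) F]
  exact Submodule.add_mem_sup (homogeneousComponent_mem_powerIdeal hGa n) hdiff

theorem eval_mem_powerIdeal_sup_pow_of_mem_sup_map_C (hF : F.IsHomogeneous n)
    (h : F ∈ powerIdeal X a ⊔ (Ideal.span (Set.range θ)).map C) :
    eval θ F ∈ powerIdeal θ a ⊔ Ideal.span (Set.range θ) ^ (n + 1) := by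
  obtain ⟨P, hP, Q, hQ, rfl⟩ := Submodule.mem_sup.mp h
  rw [← homogeneousComponent_eq_self hF, map_add, map_add]
  exact Submodule.add_mem_sup (map_eval_powerIdeal_X.le <|
    Ideal.mem_map_of_mem _ (homogeneousComponent_mem_powerIdeal hP n))
    (eval_mem_span_pow_succ (homogeneousComponent_isHomogeneous n Q)
      (homogeneousComponent_mem_map_C hQ n))

theorem map_mk_mem_powerIdeal_X_iff {I : Ideal A} :
    map (Ideal.Quotient.mk I) F ∈ powerIdeal X a ↔ F ∈ powerIdeal X a ⊔ I.map C := by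
  have hsurj := map_surjective (σ := σ) _ (Ideal.Quotient.mk_surjective (I := I))
  have hker : RingHom.ker (map (σ := σ) (Ideal.Quotient.mk I)) = I.map C := by
    rw [ker_map, Ideal.mk_ker]
  have hX : map (Ideal.Quotient.mk I) ∘ (X : σ → MvPolynomial σ A) = X :=
    funext fun j => map_X _ j
  rw [← hX, ← map_powerIdeal, ← Ideal.mem_comap, Ideal.comap_map_of_surjective _ hsurj,
    ← RingHom.ker_eq_comap_bot, hker]

variable [Fintype σ] [Algebra ℚ A]

theorem IsQuasiRegular.eval_mem_powerIdeal_sup_pow (hθ : IsQuasiRegular θ)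
    (hF : F.IsHomogeneous n) (hm : 2 * n + m ≤ ∑ j, a j)
    (h : (∑ j, θ j) ^ m * eval θ F ∈ powerIdeal θ a) :
    eval θ F ∈ powerIdeal θ a ⊔ Ideal.span (Set.range θ) ^ (n + 1) := by
  refine eval_mem_powerIdeal_sup_pow_of_mem_sup_map_C hF (map_mk_mem_powerIdeal_X_iff.mp ?_)
  refine mem_powerIdeal_of_sum_X_pow_mul_mem (hF.map _) hm ?_
  have hlead := hθ.mem_powerIdeal_X_sup_map_C (F := (∑ j, X j) ^ m * F)
    ((isHomogeneous_sum_X.pow m).mul hF) (by simpa using h)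
  simpa using map_mk_mem_powerIdeal_X_iff.mpr hlead

theorem IsQuasiRegular.mem_powerIdeal_sup_pow (hθ : IsQuasiRegular θ) {x : A}
    (hm : 2 * n + m ≤ ∑ j, a j) (h : (∑ j, θ j) ^ m * x ∈ powerIdeal θ a) :
    x ∈ powerIdeal θ a ⊔ Ideal.span (Set.range θ) ^ (n + 1) := by
  induction n with
  | zero =>
    rw [← eval_C (f := θ) x] at h ⊢
    exact hθ.eval_mem_powerIdeal_sup_pow (isHomogeneous_C σ x) hm h
  | succ n ih =>
    obtain ⟨y, hy, z, hz, rfl⟩ := Submodule.mem_sup.mp (ih (by lia))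
    obtain ⟨F, hF, rfl⟩ := (Ideal.mem_span_pow_iff_exists_isHomogeneous θ z).mp hz
    rw [mul_add, Ideal.add_mem_iff_right _ (Ideal.mul_mem_left _ _ hy)] at h
    exact add_mem (Ideal.mem_sup_left hy) (hθ.eval_mem_powerIdeal_sup_pow hF hm h)

end LeadingForms

section Graded

variable {A S : Type*} [CommRing A] [SetLike S A] [AddSubgroupClass S A] {𝒜 : ℕ → S}
  [GradedRing 𝒜] {s n m : ℕ} {x z : A}

open DirectSum

theorem coe_decompose_eq_zero_of_mem_span (hz : z ∈ Ideal.span (𝒜 s : Set A)) (hn : n < s) :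
    (decompose 𝒜 z n : A) = 0 := by
  induction hz using Submodule.closure_induction with
  | zero => simp
  | add y z _ _ hy hz => simp [hy, hz]
  | smul_mem c y hy => exact coe_decompose_mul_of_right_mem_of_not_le 𝒜 hy hn.not_ge

theorem span_pow_le_span (k : ℕ) :
    Ideal.span (𝒜 1 : Set A) ^ k ≤ Ideal.span (𝒜 k : Set A) := by
  induction k with
  | zero =>
    rw [(Ideal.eq_top_iff_one _).mpr (Ideal.subset_span (SetLike.GradedOne.one_mem (A := 𝒜)))]
    exact le_top
  | succ k ih =>
    rw [pow_succ]
    refine (Ideal.mul_mono_left ih).trans ?_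
    rw [Ideal.span_mul_span', Ideal.span_le]
    rintro _ ⟨y, hy, z, hz, rfl⟩
    exact Ideal.subset_span (SetLike.mul_mem_graded hy hz)

theorem exists_eq_sum_mul_of_mem_span {σ : Type*} [Fintype σ] {η : σ → A}
    (hη : ∀ j, η j ∈ 𝒜 s) (hx : x ∈ Ideal.span (Set.range η)) (hxn : x ∈ 𝒜 (n + s)) :
    ∃ c : σ → A, (∀ j, c j ∈ 𝒜 n) ∧ ∑ j, c j * η j = x := by
  obtain ⟨c, rfl⟩ := Ideal.mem_span_range_iff_exists_fun.mp hx
  refine ⟨fun j => decompose 𝒜 (c j) n, fun j => SetLike.coe_mem _, ?_⟩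
  rw [← decompose_of_mem_same 𝒜 hxn, decompose_sum, DFinsupp.finsetSum_apply,
    AddSubmonoidClass.coe_finsetSum]
  refine Finset.sum_congr rfl fun j _ => ?_
  rw [coe_decompose_mul_of_right_mem_of_le 𝒜 (hη j) (Nat.le_add_left s n), Nat.add_sub_cancel]

theorem mem_of_mem_sup_span_of_isHomogeneous {J : Ideal A} (hJ : J.IsHomogeneous 𝒜)
    (hxn : x ∈ 𝒜 n) (hx : x ∈ J ⊔ Ideal.span (𝒜 (n + 1) : Set A)) : x ∈ J := by
  obtain ⟨y, hy, z, hz, rfl⟩ := Submodule.mem_sup.mp hx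
  rw [← decompose_of_mem_same 𝒜 hxn, decompose_add, DirectSum.add_apply, AddMemClass.coe_add,
    coe_decompose_eq_zero_of_mem_span hz n.lt_succ_self, add_zero]
  exact hJ n hy

variable {σ : Type*} {θ : σ → A} {a : σ → ℕ}

theorem isHomogeneous_powerIdeal (hθ1 : ∀ j, θ j ∈ 𝒜 1) :
    (powerIdeal θ a).IsHomogeneous 𝒜 := by
  refine Ideal.homogeneous_span _ _ ?_
  rintro _ ⟨j, rfl⟩
  exact ⟨_, SetLike.pow_mem_graded (a j + 1) (hθ1 j)⟩

theorem IsQuasiRegular.mem_powerIdeal_of_mem_graded [Fintype σ] [Algebra ℚ A]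
    (hθ : IsQuasiRegular θ) (hθ1 : ∀ j, θ j ∈ 𝒜 1) (hxn : x ∈ 𝒜 n) (hm : 2 * n + m ≤ ∑ j, a j)
    (h : (∑ j, θ j) ^ m * x ∈ powerIdeal θ a) : x ∈ powerIdeal θ a := by
  have hspan : Ideal.span (Set.range θ) ^ (n + 1) ≤ Ideal.span (𝒜 (n + 1) : Set A) :=
    (Ideal.pow_right_mono (Ideal.span_mono (Set.range_subset_iff.mpr hθ1)) _).trans
      (span_pow_le_span _)
  exact mem_of_mem_sup_span_of_isHomogeneous (isHomogeneous_powerIdeal hθ1) hxn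
    (sup_le_sup_left hspan _ (hθ.mem_powerIdeal_sup_pow hm h))

end Graded

section Veronese

variable {K A : Type*} [CommRing K] [CommRing A] [Algebra K A] {𝒜 : ℕ → Submodule K A}
  {d q i : ℕ} {θ : Fin d → A} {x : A}

theorem mem_powerIdeal_of_mem_veroneseLsopIdealComponent
    (hx : x ∈ veroneseLsopIdealComponent K 𝒜 θ (q + 1) i) : x ∈ powerIdeal θ fun _ => q := by
  cases i with
  | zero => exact (Submodule.mem_bot K).mp hx ▸ zero_mem _
  | succ i =>
    suffices h : veroneseLsopIdealComponent K 𝒜 θ (q + 1) (i + 1) ≤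
        (powerIdeal θ fun _ => q).restrictScalars K from h hx
    refine iSup_le fun j => Submodule.map_le_iff_le_comap.mpr fun y _ => ?_
    exact Ideal.mul_mem_right _ _ (pow_mem_powerIdeal θ _ j)

theorem mem_veroneseLsopIdealComponent_of_mem_powerIdeal [GradedAlgebra 𝒜]
    (hθ1 : ∀ j, θ j ∈ 𝒜 1) (hxi : x ∈ 𝒜 (i * (q + 1))) (hx : x ∈ powerIdeal θ fun _ => q) :
    x ∈ veroneseLsopIdealComponent K 𝒜 θ (q + 1) i := by
  have hpow (j : Fin d) : θ j ^ (q + 1) ∈ 𝒜 (q + 1) := by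
    simpa using SetLike.pow_mem_graded (q + 1) (hθ1 j)
  cases i with
  | zero =>
    rw [zero_mul] at hxi
    have hspan := Ideal.span_mono (Set.range_subset_iff.mpr hpow) hx
    rw [← DirectSum.decompose_of_mem_same 𝒜 hxi,
      coe_decompose_eq_zero_of_mem_span hspan q.succ_pos]
    exact zero_mem _
  | succ i =>
    rw [Nat.succ_mul] at hxi
    obtain ⟨c, hc, rfl⟩ := exists_eq_sum_mul_of_mem_span hpow hx hxi
    exact sum_mem fun j _ =>
      Submodule.mem_iSup_of_mem j ⟨c j, hc j, mul_comm _ _⟩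

end Veronese

theorem veronese_sLefschetz_general
    {K A : Type*} [CommRing K] [CommRing A] [Algebra K A] [Algebra ℚ A]
    (𝒜 : ℕ → Submodule K A) [GradedAlgebra 𝒜] {d : ℕ} {θ : Fin d → A}
    (hθ1 : ∀ j, θ j ∈ 𝒜 1) (hθ : RingTheory.Sequence.IsWeaklyRegular A (List.ofFn θ))
    {r : ℕ} (hr : 1 ≤ r) :
    ∀ i : ℕ, 2 * i + 1 ≤ (r - 1) * d / r →
      ∀ x ∈ 𝒜 (i * r),
        ((∑ j, θ j) ^ r) ^ ((r - 1) * d / r - 2 * i) * x ∈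
            veroneseLsopIdealComponent K 𝒜 θ r ((r - 1) * d / r - i) →
          x ∈ veroneseLsopIdealComponent K 𝒜 θ r i := by
  obtain ⟨q, rfl⟩ := Nat.exists_eq_add_of_le' hr
  intro i hi x hxi hx
  refine mem_veroneseLsopIdealComponent_of_mem_powerIdeal hθ1 hxi ?_
  rw [← pow_mul] at hx
  refine (isQuasiRegular_of_isWeaklyRegular hθ).mem_powerIdeal_of_mem_graded hθ1 hxi ?_
    (mem_powerIdeal_of_mem_veroneseLsopIdealComponent hx)
  rw [Nat.add_sub_cancel] at hi ⊢
  calc 2 * (i * (q + 1)) + (q + 1) * (q * d / (q + 1) - 2 * i)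
      = (2 * i + (q * d / (q + 1) - 2 * i)) * (q + 1) := by ring
    _ = q * d / (q + 1) * (q + 1) := by rw [Nat.add_sub_cancel' (by lia)]
    _ ≤ q * d := Nat.div_mul_le_self _ _
    _ = ∑ _j : Fin d, q := by simp [mul_comm]

/-- **Theorem 1.1 (first part), Kubitzke–Murai.**
Let `K` be a field of characteristic `0`, `A` a Cohen-Macaulay standard graded `K`-algebra of
Krull dimension `d` (Cohen-Macaulayness is expressed by the statement that every linear system
of parameters is a regular sequence), let `Θ = θ₁,…,θ_d` be an l.s.o.p. for `A`, let `r ≥ 1`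
and `s = ⌊(r-1)d/r⌋`.  Then `w = (θ₁ + ⋯ + θ_d)^r` is an `s`-Lefschetz element for
`A_Θ^⟨r⟩`, i.e. multiplication by `w^(s-2i)` is injective from the degree-`i` to the
degree-`(s-i)` component of `A_Θ^⟨r⟩` for `0 ≤ i ≤ ⌊(s-1)/2⌋`; in particular `A_Θ^⟨r⟩` has
the `s`-Lefschetz property. -/
theorem veronese_sLefschetz
    (K : Type*) [Field K] [CharZero K]
    (A : Type*) [CommRing A] [Algebra K A]
    (𝒜 : ℕ → Submodule K A) [GradedAlgebra 𝒜]
    (hstd : ∀ i, 𝒜 i = 𝒜 1 ^ i)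
    (hfin : ∀ i, Module.Finite K (𝒜 i))
    (d : ℕ) (hdim : ringKrullDim A = d)
    (hCM : ∀ θ' : Fin d → A, (∀ j, θ' j ∈ 𝒜 1) →
      Module.Finite K (A ⧸ Ideal.span (Set.range θ')) →
      RingTheory.Sequence.IsRegular A (List.ofFn θ'))
    (θ : Fin d → A) (hθ1 : ∀ j, θ j ∈ 𝒜 1)
    (hθlsop : Module.Finite K (A ⧸ Ideal.span (Set.range θ)))
    (r : ℕ) (hr : 1 ≤ r) :
    ∀ i : ℕ, 2 * i + 1 ≤ (r - 1) * d / r →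
      ∀ x ∈ 𝒜 (i * r),
        ((∑ j, θ j) ^ r) ^ ((r - 1) * d / r - 2 * i) * x ∈
            veroneseLsopIdealComponent K 𝒜 θ r ((r - 1) * d / r - i) →
          x ∈ veroneseLsopIdealComponent K 𝒜 θ r i := by
  let : Algebra ℚ A := Algebra.compHom A (algebraMap ℚ K)
  exact veronese_sLefschetz_general 𝒜 hθ1 (hCM θ hθ1 hθlsop).toIsWeaklyRegular hr
end

section
/- Let K be a field of characteristic 0, let A be a Cohen-Macaulay standard graded K-algebra of Krull dimension d with h-polynomial h_A(t), and let Θ = θ_1,…,θ_d be a linear system of parameters for A. If r ≥ deg h_A(t), then A_Θ^⟨r⟩ is almost strong Lefschetz, i.e., writing A_Θ^⟨r⟩ = ⊕_{i=0}^{σ} (A_Θ^⟨r⟩)_i with (A_Θ^⟨r⟩)_σ ≠ 0, the algebra A_Θ^⟨r⟩ has the (σ−1)-Lefschetz property. -/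
/-!
Since `Θ` is a regular sequence, `A` is a free module over `S = K[θ₁, …, θ_d]`, a polynomial ring,
with a homogeneous basis lifted from `A/ΘA`; its degrees `e_k` satisfy `h_A(t) = ∑ t^{e_k}`. Hence
`A_Θ^⟨r⟩` is a direct sum of pieces of shifted copies of the monomial complete intersection
`S/(θ₁^r, …, θ_d^r)`, whose top degree is `d(r-1)`. There, multiplication by the `k`-th power of
`θ₁ + ⋯ + θ_d` is injective in degree `a` whenever `2a + k ≤ d(r-1)`, by the `sl₂`-relation between
this form and a lowering operator. The shifts only decrease `a`, so `w = (θ₁ + ⋯ + θ_d)^r` works as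
long as `(σ-1)r ≤ d(r-1)`, and this inequality follows from `e_k ≤ deg h_A ≤ r`.
-/

namespace VeroneseLefschetz

universe u

section PowersOfVariables

open MvPolynomial

variable (σ R : Type*) [CommRing R]

/-- The ideal generated by the `r`-th powers of the variables. -/
noncomputable def varPowIdeal (r : ℕ) : Ideal (MvPolynomial σ R) :=
  Ideal.span (Set.range fun j => X j ^ r)

/-- The sum of the variables, the Lefschetz element of `R[σ] / varPowIdeal σ R r`. -/
noncomputable def sumX [Fintype σ] : MvPolynomial σ R := ∑ j, X j

variable {σ R}

theorem mem_varPowIdeal_iff {r : ℕ} {f : MvPolynomial σ R} :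
    f ∈ varPowIdeal σ R r ↔ ∀ m ∈ f.support, ∃ j, r ≤ m j := by
  have hspan : varPowIdeal σ R r =
      Ideal.span ((fun m => monomial m (1 : R)) '' Set.range fun j : σ => Finsupp.single j r) := by
    rw [varPowIdeal, ← Set.range_comp]
    simp only [X_pow_eq_monomial, Function.comp_def]
  simp [hspan, mem_ideal_span_monomial_image, Finsupp.single_le_iff]

theorem monomial_mem_varPowIdeal {r : ℕ} {m : σ →₀ ℕ} {j : σ} (hj : r ≤ m j) (c : R) :
    monomial m c ∈ varPowIdeal σ R r :=
  mem_varPowIdeal_iff.2 fun _ hm' =>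
    ⟨j, by rwa [Finset.mem_singleton.1 (support_monomial_subset hm')]⟩

variable [Fintype σ]

/-- The lowering operator of the `sl₂`-action on `R[σ] / varPowIdeal σ R (s + 1)`, in which `sumX`
is the raising operator, lifted to the polynomial ring. -/
noncomputable def lowering (s : ℕ) : MvPolynomial σ R →ₗ[R] MvPolynomial σ R :=
  ∑ j, (s • (pderiv j).toLinearMap -
    LinearMap.mulLeft R (X j) ∘ₗ (pderiv j).toLinearMap ∘ₗ (pderiv j).toLinearMap)

theorem lowering_apply (s : ℕ) (f : MvPolynomial σ R) :
    lowering s f = ∑ j, (s • pderiv j f - X j * pderiv j (pderiv j f)) := by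
  simp [lowering]

theorem lowering_monomial (s : ℕ) (m : σ →₀ ℕ) (c : R) :
    lowering s (monomial m c) =
      ∑ j, monomial (m - Finsupp.single j 1) (c * (m j * (s + 1 - m j))) := by
  rw [lowering_apply]
  refine Finset.sum_congr rfl fun j _ => ?_
  rw [pderiv_monomial, X_mul_pderiv_monomial, smul_monomial, smul_monomial, ← map_sub]
  congr 1
  rcases Nat.eq_zero_or_pos (m j) with hm | hm
  · simp [hm]
  · simp only [nsmul_eq_mul, Finsupp.tsub_apply, Finsupp.single_eq_same, Nat.cast_sub hm,
      Nat.cast_one]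
    ring

theorem isHomogeneous_sumX : (sumX σ R).IsHomogeneous 1 :=
  IsHomogeneous.sum _ _ _ fun j _ => isHomogeneous_X R j

theorem pderiv_sumX (j : σ) : pderiv j (sumX σ R) = 1 := by
  classical
  simp [sumX, pderiv_X, Pi.single_apply]

theorem lowering_sumX_mul (s : ℕ) {a : ℕ} {f : MvPolynomial σ R} (hf : f.IsHomogeneous a) :
    lowering s (sumX σ R * f) =
      sumX σ R * lowering s f + (Fintype.card σ * s - 2 * a : R) • f := by
  have euler : (Fintype.card σ * s - 2 * a : R) • f =
      ∑ j, (s • f - 2 * (X j * pderiv j f)) := by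
    rw [Finset.sum_sub_distrib, ← Finset.mul_sum, hf.sum_X_mul_pderiv, Finset.sum_const,
      Finset.card_univ]
    simp only [sub_smul, mul_smul, ofNat_smul_eq_nsmul, Nat.cast_smul_eq_nsmul, nsmul_eq_mul,
      Nat.cast_ofNat]
  rw [euler, lowering_apply, lowering_apply, Finset.mul_sum, ← Finset.sum_add_distrib]
  refine Finset.sum_congr rfl fun j _ => ?_
  simp only [Derivation.leibniz, pderiv_sumX, smul_eq_mul, map_add, Derivation.map_one_eq_zero,
    nsmul_eq_mul]
  ring

theorem lowering_sumX_pow_mul (s k : ℕ) {a : ℕ} {f : MvPolynomial σ R} (hf : f.IsHomogeneous a) :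
    lowering s (sumX σ R ^ (k + 1) * f) = sumX σ R ^ (k + 1) * lowering s f +
      ((k + 1) * (Fintype.card σ * s - 2 * a - k) : R) • (sumX σ R ^ k * f) := by
  induction k with
  | zero => simpa using lowering_sumX_mul s hf
  | succ k ih =>
    have hkf : (sumX σ R ^ (k + 1) * f).IsHomogeneous (k + 1 + a) := by
      simpa using (isHomogeneous_sumX.pow (k + 1)).mul hf
    rw [pow_succ' _ (k + 1), mul_assoc, lowering_sumX_mul s hkf, ih, mul_add, mul_smul_comm,
      ← mul_assoc, ← mul_assoc, ← pow_succ', ← pow_succ', add_assoc, ← add_smul]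
    congr 2
    push_cast
    ring

theorem lowering_of_isHomogeneous_zero (s : ℕ) {f : MvPolynomial σ R} (hf : f.IsHomogeneous 0) :
    lowering s f = 0 := by
  rw [← totalDegree_zero_iff_isHomogeneous, totalDegree_eq_zero_iff_eq_C] at hf
  rw [hf, ← monomial_zero', lowering_monomial]
  simp

theorem isHomogeneous_lowering (s : ℕ) {a : ℕ} {f : MvPolynomial σ R}
    (hf : f.IsHomogeneous (a + 1)) : (lowering s f).IsHomogeneous a := by
  rw [f.as_sum, map_sum]
  refine IsHomogeneous.sum _ _ _ fun m hm => ?_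
  rw [lowering_monomial]
  refine IsHomogeneous.sum _ _ _ fun j _ => ?_
  rcases Nat.eq_zero_or_pos (m j) with hmj | hmj
  · simpa [hmj] using isHomogeneous_zero σ R a
  · refine isHomogeneous_monomial _ ?_
    have hdeg : m.degree = a + 1 := by
      rw [Finsupp.degree_eq_weight_one]
      exact hf (mem_support_iff.1 hm)
    rw [← tsub_add_cancel_of_le (Finsupp.single_le_iff.2 hmj : Finsupp.single j 1 ≤ m),
      map_add, Finsupp.degree_single] at hdeg
    omega

theorem mem_varPowIdeal_of_card_mul_lt_degree {s : ℕ} {f : MvPolynomial σ R}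
    (hf : ∀ m ∈ f.support, Fintype.card σ * s < m.degree) : f ∈ varPowIdeal σ R (s + 1) := by
  refine mem_varPowIdeal_iff.2 fun m hm => ?_
  obtain ⟨j, -, hj⟩ : ∃ j ∈ Finset.univ, s < m j := Finset.exists_lt_of_sum_lt <| by
    simpa [Finsupp.degree_eq_sum] using hf m hm
  exact ⟨j, hj⟩

theorem lowering_mem_varPowIdeal {s : ℕ} {f : MvPolynomial σ R}
    (hf : f ∈ varPowIdeal σ R (s + 1)) : lowering s f ∈ varPowIdeal σ R (s + 1) := by
  rw [f.as_sum, map_sum]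
  refine Ideal.sum_mem _ fun m hm => ?_
  obtain ⟨i, hi⟩ := mem_varPowIdeal_iff.1 hf m hm
  rw [lowering_monomial]
  refine Ideal.sum_mem _ fun j _ => ?_
  by_cases hmj : m j = s + 1
  · simp [hmj]
  · refine monomial_mem_varPowIdeal (j := i) ?_ _
    by_cases hij : j = i
    · subst hij
      simp only [Finsupp.tsub_apply, Finsupp.single_eq_same]
      omega
    · simpa [hij] using hi

theorem sumX_pow_mul_lowering_mem {s k a : ℕ} {f : MvPolynomial σ R} (hf : f.IsHomogeneous a)
    (h : sumX σ R ^ (k + 1) * f ∈ varPowIdeal σ R (s + 1)) :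
    sumX σ R ^ (k + 2) * lowering s f ∈ varPowIdeal σ R (s + 1) := by
  have hlow := lowering_mem_varPowIdeal h
  rw [lowering_sumX_pow_mul s k hf] at hlow
  have hmul := Ideal.mul_mem_left _ (sumX σ R) hlow
  rw [mul_add, mul_smul_comm, ← mul_assoc, ← mul_assoc, ← pow_succ', ← pow_succ'] at hmul
  exact (Ideal.add_mem_iff_left _ (Submodule.smul_of_tower_mem _ _ h)).1 hmul

theorem sumX_pow_mul_mem_of_lowering_mem {K : Type*} [Field K] [CharZero K] {s k a : ℕ}
    {f : MvPolynomial σ K} (hf : f.IsHomogeneous a) (hak : 2 * a + k < Fintype.card σ * s)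
    (h : sumX σ K ^ (k + 1) * f ∈ varPowIdeal σ K (s + 1))
    (hlow : lowering s f ∈ varPowIdeal σ K (s + 1)) :
    sumX σ K ^ k * f ∈ varPowIdeal σ K (s + 1) := by
  have hne : ((k + 1) * (Fintype.card σ * s - 2 * a - k) : K) ≠ 0 := by
    refine mul_ne_zero k.cast_add_one_ne_zero ?_
    rw [sub_sub, sub_ne_zero]
    exact_mod_cast hak.ne'
  have hsum := lowering_mem_varPowIdeal h
  rw [lowering_sumX_pow_mul s k hf] at hsum
  exact (Submodule.smul_mem_iff _ hne).1
    ((Ideal.add_mem_iff_right _ (Ideal.mul_mem_left _ _ hlow)).1 hsum)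

-- Lowering `f` drops `a` by one and raises `k` by one, so the bound on `2 * a + k` persists; once
-- `lowering s f` is known to lie in the ideal, the commutation relation strips off one power of
-- `sumX`.
theorem mem_varPowIdeal_of_sumX_pow_mul_mem {K : Type*} [Field K] [CharZero K] {s k a : ℕ}
    {f : MvPolynomial σ K} (hf : f.IsHomogeneous a) (hak : 2 * a + k ≤ Fintype.card σ * s)
    (h : sumX σ K ^ k * f ∈ varPowIdeal σ K (s + 1)) : f ∈ varPowIdeal σ K (s + 1) := by
  induction a generalizing k f with
  | zero =>
    induction k with
    | zero => simpa using h
    | succ k ihk =>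
      have hlow : lowering s f ∈ varPowIdeal σ K (s + 1) := by
        simp [lowering_of_isHomogeneous_zero s hf]
      exact ihk (by omega) (sumX_pow_mul_mem_of_lowering_mem hf (by omega) h hlow)
  | succ a iha =>
    induction k with
    | zero => simpa using h
    | succ k ihk =>
      have hlow : lowering s f ∈ varPowIdeal σ K (s + 1) :=
        iha (isHomogeneous_lowering s hf) (by omega) (sumX_pow_mul_lowering_mem hf h)
      exact ihk (by omega) (sumX_pow_mul_mem_of_lowering_mem hf (by omega) h hlow)

end PowersOfVariables

section Independence

open RingTheory.Sequence MvPolynomial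
open scoped Pointwise Polynomial

variable {A M ι : Type*} [CommRing A] [AddCommGroup M] [Module A M] [Fintype ι]

theorem eq_zero_of_sum_eval₂_smul_eq_zero {R : Type*} [CommRing R] {f : R →+* A} {t : A}
    (ht : IsSMulRegular M t) {b : ι → M}
    (hb : ∀ c : ι → R, ∑ k, f (c k) • b k ∈ t • (⊤ : Submodule A M) → c = 0)
    {q : ι → R[X]} (hq : ∑ k, (q k).eval₂ f t • b k = 0) : q = 0 := by
  have split (q : ι → R[X]) : ∑ k, (q k).eval₂ f t • b k =
      t • ∑ k, (q k).divX.eval₂ f t • b k + ∑ k, f ((q k).coeff 0) • b k := by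
    rw [Finset.smul_sum, ← Finset.sum_add_distrib]
    refine Finset.sum_congr rfl fun k _ => ?_
    conv_lhs => rw [← (q k).divX_mul_X_add]
    rw [Polynomial.eval₂_add, Polynomial.eval₂_mul_X, Polynomial.eval₂_C, add_smul, mul_comm,
      mul_smul]
  have coeff_zero {q : ι → R[X]} (hq : ∑ k, (q k).eval₂ f t • b k = 0) (k : ι) :
      (q k).coeff 0 = 0 := by
    refine congrFun (hb (fun k => (q k).coeff 0) ?_) k
    rw [split] at hq
    rw [eq_neg_of_add_eq_zero_right hq]
    exact neg_mem (Submodule.smul_mem_pointwise_smul _ _ _ trivial)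
  have divX_relation {q : ι → R[X]} (hq : ∑ k, (q k).eval₂ f t • b k = 0) :
      ∑ k, (q k).divX.eval₂ f t • b k = 0 := by
    refine ht.right_eq_zero_of_smul ?_
    have hsplit := split q
    simp only [hq, coeff_zero hq, map_zero, zero_smul, Finset.sum_const_zero, add_zero] at hsplit
    exact hsplit.symm
  suffices hcoeff : ∀ n k, (q k).coeff n = 0 by
    ext k n
    simp [hcoeff]
  intro n
  induction n generalizing q with
  | zero => exact coeff_zero hq
  | succ n ih => exact fun k => by simpa using ih (divX_relation hq) k

theorem aeval_eq_eval₂_finSuccEquiv {K : Type*} [CommRing K] [Algebra K A] {d : ℕ}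
    (θ : Fin (d + 1) → A) (p : MvPolynomial (Fin (d + 1)) K) :
    aeval θ p = (finSuccEquiv K d p).eval₂ (aeval (Fin.tail θ) : MvPolynomial (Fin d) K →ₐ[K] A)
      (θ 0) := by
  induction p using MvPolynomial.induction_on with
  | C a => simp [finSuccEquiv_apply]
  | add p q hp hq => rw [map_add, map_add, Polynomial.eval₂_add, hp, hq]
  | mul_X p i hp =>
    rw [map_mul, map_mul, Polynomial.eval₂_mul, hp]
    cases i using Fin.cases <;> simp [finSuccEquiv_X_zero, finSuccEquiv_X_succ, Fin.tail]

theorem mk_mem_ofList_smul_top_iff (t : A) (rs : List A) (x : M) :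
    (Submodule.Quotient.mk x : QuotSMulTop t M) ∈
        (Ideal.ofList rs • ⊤ : Submodule A (QuotSMulTop t M)) ↔
      x ∈ (Ideal.ofList (t :: rs) • ⊤ : Submodule A M) := by
  have hmap : (Ideal.ofList rs • ⊤ : Submodule A (QuotSMulTop t M)) =
      (Ideal.ofList rs • ⊤ : Submodule A M).map (Submodule.mkQ _) := by
    rw [Submodule.map_smul'', Submodule.map_top, Submodule.range_mkQ]
  rw [hmap, Ideal.ofList_cons_smul, ← Submodule.mkQ_apply, ← Submodule.mem_comap,
    Submodule.comap_map_mkQ]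

theorem eq_zero_of_sum_aeval_smul_eq_zero {K : Type*} [CommRing K] [Algebra K A] {d : ℕ}
    {θ : Fin d → A} (hθ : IsWeaklyRegular M (List.ofFn θ)) {b : ι → M}
    (hb : ∀ c : ι → K, ∑ k, algebraMap K A (c k) • b k ∈
      (Ideal.ofList (List.ofFn θ) • ⊤ : Submodule A M) → c = 0)
    {p : ι → MvPolynomial (Fin d) K} (hp : ∑ k, aeval θ (p k) • b k = 0) : p = 0 := by
  induction d generalizing M with
  | zero =>
    have hC (k : ι) : p k = C (coeff 0 (p k)) := eq_C_of_isEmpty _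
    have hcoeff := hb (fun k => coeff 0 (p k)) (by
      simp_rw [← aeval_C (R := K) θ, ← hC, hp]
      exact Submodule.zero_mem _)
    ext1 k
    rw [hC k, congrFun hcoeff k, Pi.zero_apply, C_0, Pi.zero_apply]
  | succ d ih =>
    rw [List.ofFn_succ] at hθ hb
    obtain ⟨hθ_head, hθ_tail⟩ := (isWeaklyRegular_cons_iff _ _ _).1 hθ
    have hb_tail (c : ι → MvPolynomial (Fin d) K)
        (hc : ∑ k, aeval (Fin.tail θ) (c k) • b k ∈ θ 0 • (⊤ : Submodule A M)) : c = 0 := by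
      refine ih (M := QuotSMulTop (θ 0) M) hθ_tail (b := fun k => Submodule.Quotient.mk (b k))
        (fun c' hc' => hb c' ?_) ?_
      · rw [← mk_mem_ofList_smul_top_iff, ← Submodule.mkQ_apply, map_sum]
        exact hc'
      · rw [← (Submodule.Quotient.mk_eq_zero _).2 hc, ← Submodule.mkQ_apply, map_sum]
        rfl
    have hsucc : (fun k => finSuccEquiv K d (p k)) = 0 := by
      simp_rw [aeval_eq_eval₂_finSuccEquiv] at hp
      exact eq_zero_of_sum_eval₂_smul_eq_zero hθ_head hb_tail hp
    ext1 k
    exact (map_eq_zero_iff _ (finSuccEquiv K d).injective).1 (congrFun hsucc k)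

end Independence

section HomogeneousBasis

variable {K V κ : Type*} [CommRing K] [AddCommGroup V] [Module K V]
  {ℳ : ℕ → Submodule K V} [DirectSum.Decomposition ℳ]
  {v : Module.Basis κ K V} {δ : κ → ℕ}

theorem span_image_preimage_eq (hv : ∀ k, v k ∈ ℳ (δ k)) (n : ℕ) :
    Submodule.span K (v '' (δ ⁻¹' {n})) = ℳ n := by
  have hsup : ⨆ n, Submodule.span K (v '' (δ ⁻¹' {n})) = ⊤ := by
    rw [eq_top_iff, ← v.span_eq, Submodule.span_le]
    rintro _ ⟨k, rfl⟩
    exact Submodule.mem_iSup_of_mem (δ k) (Submodule.subset_span ⟨k, rfl, rfl⟩)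
  have hle : (fun n => Submodule.span K (v '' (δ ⁻¹' {n}))) ≤ ℳ := fun n => by
    rw [Submodule.span_le]
    rintro _ ⟨k, rfl, rfl⟩
    exact hv k
  have hind := (DirectSum.Decomposition.isInternal ℳ).submodule_iSupIndep
  exact congrFun ((hind.le_iff_eq_of_iSup_eq_top hsup).1 hle) n

theorem finrank_eq_card_preimage [Nontrivial K] (hv : ∀ k, v k ∈ ℳ (δ k)) (n : ℕ) :
    Module.finrank K (ℳ n) = Nat.card (δ ⁻¹' {n}) := by
  rw [← span_image_preimage_eq hv n, Set.image_eq_range]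
  exact Module.finrank_eq_nat_card_basis
    (Module.Basis.span (v.linearIndependent.comp _ Subtype.val_injective))

theorem eq_degree_of_repr_ne_zero (hv : ∀ k, v k ∈ ℳ (δ k)) {n : ℕ} {x : V} (hx : x ∈ ℳ n)
    {k : κ} (hk : v.repr x k ≠ 0) : δ k = n := by
  rw [← span_image_preimage_eq hv n, v.mem_span_image] at hx
  exact hx (Finsupp.mem_support_iff.2 hk)

end HomogeneousBasis

section GradedAlgebra

open DirectSum

variable {K A : Type*} [CommRing K] [CommRing A] [Algebra K A]
  {𝒜 : ℕ → Submodule K A} [GradedAlgebra 𝒜]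

theorem exists_sum_mul_of_mem_span {ι : Type*} [Fintype ι] {t : ι → A} {r n : ℕ}
    (ht : ∀ j, t j ∈ 𝒜 r) {x : A} (hx : x ∈ Ideal.span (Set.range t)) :
    ∃ c : ι → A, (∀ j, c j ∈ 𝒜 n) ∧ (decompose 𝒜 x (n + r) : A) = ∑ j, t j * c j := by
  obtain ⟨c, rfl⟩ := Ideal.mem_span_range_iff_exists_fun.1 hx
  refine ⟨fun j => decompose 𝒜 (c j) n, fun j => SetLike.coe_mem _, ?_⟩
  rw [decompose_sum, DFinsupp.finsetSum_apply, AddSubmonoidClass.coe_finsetSum]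
  refine Finset.sum_congr rfl fun j _ => ?_
  rw [coe_decompose_mul_of_right_mem_of_le 𝒜 (ht j) (Nat.le_add_left r n), Nat.add_sub_cancel,
    mul_comm]

theorem decompose_eq_zero_of_mem_span {ι : Type*} [Finite ι] {t : ι → A} {r n : ℕ}
    (ht : ∀ j, t j ∈ 𝒜 r) (hnr : n < r) {x : A} (hx : x ∈ Ideal.span (Set.range t)) :
    (decompose 𝒜 x n : A) = 0 := by
  have := Fintype.ofFinite ι
  obtain ⟨c, rfl⟩ := Ideal.mem_span_range_iff_exists_fun.1 hx
  rw [decompose_sum, DFinsupp.finsetSum_apply, AddSubmonoidClass.coe_finsetSum]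
  exact Finset.sum_eq_zero fun j _ =>
    coe_decompose_mul_of_right_mem_of_not_le 𝒜 (ht j) hnr.not_ge

theorem graded_nakayama {ι : Type*} [Finite ι] {θ : ι → A} (hθ : ∀ j, θ j ∈ 𝒜 1)
    {P : Submodule K A} (hhom : ∀ n, P ≤ P.comap (GradedAlgebra.proj 𝒜 n))
    (hmul : ∀ j, ∀ x ∈ P, θ j * x ∈ P)
    (hsup : P ⊔ (Ideal.span (Set.range θ)).restrictScalars K = ⊤) : P = ⊤ := by
  have := Fintype.ofFinite ι
  have mem_of_decompose_mem {n : ℕ} {x : A} (hx : x ∈ 𝒜 n)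
      (h : ∀ y ∈ Ideal.span (Set.range θ), (decompose 𝒜 y n : A) ∈ P) : x ∈ P := by
    obtain ⟨p, hp, y, hy, rfl⟩ := Submodule.mem_sup.1 (hsup ▸ Submodule.mem_top : x ∈ P ⊔ _)
    rw [← decompose_of_mem_same 𝒜 hx, decompose_add]
    exact P.add_mem (hhom n hp) (h y hy)
  have mem_of_mem (n : ℕ) : ∀ x ∈ 𝒜 n, x ∈ P := by
    induction n with
    | zero =>
      refine fun x hx => mem_of_decompose_mem hx fun y hy => ?_
      rw [decompose_eq_zero_of_mem_span hθ zero_lt_one hy]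
      exact P.zero_mem
    | succ n ih =>
      refine fun x hx => mem_of_decompose_mem hx fun y hy => ?_
      obtain ⟨c, hc, hyc⟩ := exists_sum_mul_of_mem_span (n := n) hθ hy
      rw [hyc]
      exact P.sum_mem fun j _ => hmul j _ (ih _ (hc j))
  classical
  refine eq_top_iff.2 fun x _ => ?_
  rw [← sum_support_decompose 𝒜 x]
  exact P.sum_mem fun n _ => mem_of_mem n _ (SetLike.coe_mem _)

theorem span_le_comap_proj {s : Set A} (hs : ∀ x ∈ s, SetLike.IsHomogeneousElem 𝒜 x) (n : ℕ) :
    Submodule.span K s ≤ (Submodule.span K s).comap (GradedAlgebra.proj 𝒜 n) := by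
  refine Submodule.span_le.2 fun x hx => ?_
  obtain ⟨m, hm⟩ := hs x hx
  rw [SetLike.mem_coe, Submodule.mem_comap, GradedAlgebra.proj_apply]
  by_cases hmn : m = n
  · subst hmn
    rw [decompose_of_mem_same 𝒜 hm]
    exact Submodule.subset_span hx
  · rw [decompose_of_mem_ne 𝒜 hm hmn]
    exact Submodule.zero_mem _

theorem exists_basis_of_homogeneous {K : Type*} [Field K] [Algebra K A]
    {𝒜 : ℕ → Submodule K A} [GradedAlgebra 𝒜] {W : Type u} [AddCommGroup W] [Module K W]
    {φ : A →ₗ[K] W} (hφ : Function.Surjective φ) :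
    ∃ (κ : Type u) (v : Module.Basis κ K W) (β : κ → A),
      (∀ k, SetLike.IsHomogeneousElem 𝒜 (β k)) ∧ ∀ k, φ (β k) = v k := by
  classical
  have hspan : ⊤ ≤ Submodule.span K (φ '' {x | SetLike.IsHomogeneousElem 𝒜 x}) := by
    rw [← LinearMap.range_eq_top.2 hφ, Submodule.span_image, ← Submodule.map_top]
    refine Submodule.map_mono fun x _ => ?_
    rw [← sum_support_decompose 𝒜 x]
    exact Submodule.sum_mem _ fun n _ => Submodule.subset_span ⟨n, SetLike.coe_mem _⟩
  choose β hβ using fun k => Module.Basis.ofSpan_subset hspan (Set.mem_range_self k)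
  exact ⟨_, Module.Basis.ofSpan hspan, β, fun k => (hβ k).1, fun k => (hβ k).2⟩

end GradedAlgebra

section FreeOverParameters

open MvPolynomial RingTheory.Sequence

section PolynomialAction

variable {K A σ : Type*} [CommRing K] [CommRing A] [Algebra K A]
  {𝒜 : ℕ → Submodule K A} [GradedAlgebra 𝒜]
  [Algebra (MvPolynomial σ K) A] [IsScalarTower K (MvPolynomial σ K) A]

theorem algebraMap_eq_aeval (p : MvPolynomial σ K) :
    algebraMap (MvPolynomial σ K) A p = aeval (fun j => algebraMap (MvPolynomial σ K) A (X j)) p :=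
  DFunLike.congr_fun (aeval_unique (IsScalarTower.toAlgHom K (MvPolynomial σ K) A)) p

theorem algebraMap_monomial_mem (hX : ∀ j, algebraMap (MvPolynomial σ K) A (X j) ∈ 𝒜 1)
    (m : σ →₀ ℕ) : algebraMap (MvPolynomial σ K) A (monomial m 1) ∈ 𝒜 m.degree := by
  rw [algebraMap_eq_aeval, aeval_monomial, map_one, one_mul]
  simpa [Finsupp.prod, Finsupp.degree_apply] using
    SetLike.prod_pow_mem_graded 𝒜 (fun _ => 1) _ m fun j (_ : j ∈ m.support) => hX j

theorem monomial_smul_mem (hX : ∀ j, algebraMap (MvPolynomial σ K) A (X j) ∈ 𝒜 1)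
    (m : σ →₀ ℕ) {n : ℕ} {x : A} (hx : x ∈ 𝒜 n) :
    (monomial m 1 : MvPolynomial σ K) • x ∈ 𝒜 (m.degree + n) := by
  rw [Algebra.smul_def]
  exact SetLike.mul_mem_graded (algebraMap_monomial_mem hX m) hx

theorem span_range_eq_top [Finite σ] (hX : ∀ j, algebraMap (MvPolynomial σ K) A (X j) ∈ 𝒜 1)
    {ι : Type*} {β : ι → A} (hhom : ∀ k, SetLike.IsHomogeneousElem 𝒜 (β k))
    (hβ : Submodule.span K (Set.range β) ⊔ (Ideal.span (Set.range fun j =>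
      algebraMap (MvPolynomial σ K) A (X j))).restrictScalars K = ⊤) :
    Submodule.span (MvPolynomial σ K) (Set.range β) = ⊤ := by
  have htower := Submodule.span_smul_of_span_eq_top (basisMonomials σ K).span_eq (Set.range β)
  rw [← Submodule.restrictScalars_eq_top_iff K, ← htower]
  refine graded_nakayama hX (fun n => span_le_comap_proj ?_ n) (fun j x hx => ?_) ?_
  · rintro _ ⟨_, ⟨m, rfl⟩, _, ⟨k, rfl⟩, rfl⟩
    obtain ⟨n, hn⟩ := hhom k
    exact ⟨m.degree + n, by simpa using monomial_smul_mem hX m hn⟩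
  · rw [htower, Submodule.restrictScalars_mem] at hx ⊢
    rw [← Algebra.smul_def]
    exact Submodule.smul_mem _ _ hx
  · rw [htower, eq_top_iff, ← hβ]
    exact sup_le_sup_right (Submodule.span_le_restrictScalars K _ _) _

theorem linearIndependent_of_isWeaklyRegular {d : ℕ} {θ : Fin d → A}
    [Algebra (MvPolynomial (Fin d) K) A] [IsScalarTower K (MvPolynomial (Fin d) K) A]
    (hX : ∀ j, algebraMap (MvPolynomial (Fin d) K) A (X j) = θ j)
    (hθ : IsWeaklyRegular A (List.ofFn θ)) {ι : Type*} [Finite ι] {β : ι → A}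
    (hβ : LinearIndependent K (Ideal.Quotient.mk (Ideal.span (Set.range θ)) ∘ β)) :
    LinearIndependent (MvPolynomial (Fin d) K) β := by
  have := Fintype.ofFinite ι
  refine Fintype.linearIndependent_iff.2 fun p hp k => ?_
  refine congrFun (eq_zero_of_sum_aeval_smul_eq_zero (K := K) hθ (b := β) (fun c hc => ?_) ?_) k
  · have hlist : Ideal.ofList (List.ofFn θ) = Ideal.span (Set.range θ) := by
      rw [Ideal.ofList]
      congr
      ext x
      simp
    refine funext (Fintype.linearIndependent_iff.1 hβ c ?_)
    rw [hlist, smul_eq_mul, Ideal.mul_top, ← Ideal.Quotient.eq_zero_iff_mem, map_sum] at hc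
    rw [← hc]
    refine Finset.sum_congr rfl fun k _ => ?_
    rw [smul_eq_mul, ← Algebra.smul_def]
    rfl
  · rw [← hp]
    refine Finset.sum_congr rfl fun k _ => ?_
    rw [Algebra.smul_def (p k), algebraMap_eq_aeval, funext hX, smul_eq_mul]

end PolynomialAction

theorem exists_homogeneous_basis {K : Type*} {A : Type u} [Field K] [CommRing A] [Algebra K A]
    {𝒜 : ℕ → Submodule K A} [GradedAlgebra 𝒜] {d : ℕ} {θ : Fin d → A}
    [Algebra (MvPolynomial (Fin d) K) A] [IsScalarTower K (MvPolynomial (Fin d) K) A]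
    (hX : ∀ j, algebraMap (MvPolynomial (Fin d) K) A (X j) = θ j) (hθ1 : ∀ j, θ j ∈ 𝒜 1)
    (hθ : IsWeaklyRegular A (List.ofFn θ)) [Module.Finite K (A ⧸ Ideal.span (Set.range θ))] :
    ∃ (ι : Type u) (_ : Finite ι) (b : Module.Basis ι (MvPolynomial (Fin d) K) A),
      ∀ k, SetLike.IsHomogeneousElem 𝒜 (b k) := by
  let φ : A →ₗ[K] A ⧸ Ideal.span (Set.range θ) := (Ideal.Quotient.mkₐ K _).toLinearMap
  have hφ : Function.Surjective φ := Ideal.Quotient.mkₐ_surjective K _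
  obtain ⟨ι, v, β, hhom, hβ⟩ := exists_basis_of_homogeneous (𝒜 := 𝒜) hφ
  have hι : Finite ι := Module.Finite.finite_basis v
  have hv : φ ∘ β = v := funext hβ
  have hspan : Submodule.span (MvPolynomial (Fin d) K) (Set.range β) = ⊤ := by
    refine span_range_eq_top (fun j => (hX j).symm ▸ hθ1 j) hhom ?_
    have hker : φ.ker = (Ideal.span (Set.range θ)).restrictScalars K := by
      ext x
      exact Ideal.Quotient.eq_zero_iff_mem
    rw [funext hX, ← hker, ← Submodule.comap_map_eq, Submodule.map_span, ← Set.range_comp, hv,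
      v.span_eq, Submodule.comap_top]
  have hli := linearIndependent_of_isWeaklyRegular hX hθ (hv ▸ v.linearIndependent)
  exact ⟨ι, hι, Module.Basis.mk hli hspan.ge, fun k => by simpa using hhom k⟩

end FreeOverParameters

theorem mem_map_algebraMap_iff_repr {S A ι : Type*} [CommRing S] [CommRing A] [Algebra S A]
    (b : Module.Basis ι S A) {I : Ideal S} {x : A} :
    x ∈ I.map (algebraMap S A) ↔ ∀ k, b.repr x k ∈ I := by
  rw [← Submodule.restrictScalars_mem S, ← Ideal.smul_top_eq_map, ← b.span_eq,
    Submodule.mem_ideal_smul_span_iff_exists_sum]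
  refine ⟨?_, fun h => ⟨b.repr x, h, b.linearCombination_repr x⟩⟩
  rintro ⟨a, ha, rfl⟩ k
  rw [← Finsupp.linearCombination_apply, b.repr_linearCombination]
  exact ha k

section HomogeneousPolynomialBasis

open MvPolynomial

variable {K A σ ι : Type*} [CommRing K] [CommRing A] [Algebra K A]
  {𝒜 : ℕ → Submodule K A} [GradedAlgebra 𝒜]
  [Algebra (MvPolynomial σ K) A] [IsScalarTower K (MvPolynomial σ K) A]
  {b : Module.Basis ι (MvPolynomial σ K) A} {e : ι → ℕ}

theorem smulTower'_basisMonomials_mem (hX : ∀ j, algebraMap (MvPolynomial σ K) A (X j) ∈ 𝒜 1)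
    (hb : ∀ k, b k ∈ 𝒜 (e k)) (i : ι × (σ →₀ ℕ)) :
    (basisMonomials σ K).smulTower' b i ∈ 𝒜 (i.2.degree + e i.1) := by
  rw [Module.Basis.smulTower'_apply, coe_basisMonomials]
  exact monomial_smul_mem hX i.2 (hb i.1)

theorem degree_add_eq_of_mem_support_repr
    (hX : ∀ j, algebraMap (MvPolynomial σ K) A (X j) ∈ 𝒜 1)
    (hb : ∀ k, b k ∈ 𝒜 (e k)) {n : ℕ} {x : A} (hx : x ∈ 𝒜 n) {k : ι} {m : σ →₀ ℕ}
    (hm : m ∈ (b.repr x k).support) : m.degree + e k = n :=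
  eq_degree_of_repr_ne_zero (smulTower'_basisMonomials_mem hX hb) hx (k := (k, m)) <| by
    rw [Module.Basis.smulTower'_repr_mk]
    exact mem_support_iff.1 hm

theorem isHomogeneous_repr (hX : ∀ j, algebraMap (MvPolynomial σ K) A (X j) ∈ 𝒜 1)
    (hb : ∀ k, b k ∈ 𝒜 (e k)) {n : ℕ} {x : A} (hx : x ∈ 𝒜 n) (k : ι) :
    (b.repr x k).IsHomogeneous (n - e k) := fun m hm => by
  have hdeg := degree_add_eq_of_mem_support_repr hX hb hx (mem_support_iff.2 hm)
  rw [Finsupp.degree_eq_weight_one] at hdeg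
  exact Nat.eq_sub_of_add_eq hdeg

end HomogeneousPolynomialBasis

section HilbertSeries

open MvPolynomial PowerSeries

theorem coeff_X_pow_mul_mk_one_pow (σ : Type*) [Fintype σ] (a n : ℕ) :
    coeff n (PowerSeries.X ^ a * PowerSeries.mk 1 ^ Fintype.card σ : ℤ⟦X⟧) =
      Nat.card {m : σ →₀ ℕ // m.degree + a = n} := by
  classical
  rw [PowerSeries.coeff_X_pow_mul']
  split_ifs with han
  · rw [← Finset.card_univ, ← Finset.prod_const, coeff_prod,
      Nat.subtype_card (Finset.univ.finsuppAntidiag (n - a)) fun m => ?_]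
    · simp
    · rw [Finset.mem_finsuppAntidiag, and_iff_left (Finset.subset_univ _),
        eq_tsub_iff_add_eq_of_le han, Finsupp.degree_eq_sum]
  · rw [eq_comm, Nat.cast_eq_zero, Nat.card_eq_zero]
    exact .inl ⟨fun m => han (m.2 ▸ Nat.le_add_left _ _)⟩

variable {K A σ ι : Type*} [CommRing K] [Nontrivial K] [CommRing A] [Algebra K A]
  {𝒜 : ℕ → Submodule K A} [GradedAlgebra 𝒜] [Fintype σ] [Fintype ι]
  [Algebra (MvPolynomial σ K) A] [IsScalarTower K (MvPolynomial σ K) A]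
  {b : Module.Basis ι (MvPolynomial σ K) A} {e : ι → ℕ}

theorem mk_finrank_eq_sum_X_pow_mul (hX : ∀ j, algebraMap (MvPolynomial σ K) A (.X j) ∈ 𝒜 1)
    (hb : ∀ k, b k ∈ 𝒜 (e k)) :
    (PowerSeries.mk fun n => (Module.finrank K (𝒜 n) : ℤ)) =
      ∑ k, PowerSeries.X ^ e k * PowerSeries.mk 1 ^ Fintype.card σ := by
  ext n
  have (k : ι) : Finite {m : σ →₀ ℕ // m.degree + e k = n} :=
    ((Finsupp.finite_of_degree_eq (n - e k)).subset fun _ => Nat.eq_sub_of_add_eq).to_subtype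
  rw [coeff_mk, finrank_eq_card_preimage (smulTower'_basisMonomials_mem hX hb), map_sum]
  simp_rw [coeff_X_pow_mul_mk_one_pow]
  rw [← Nat.cast_sum, ← Nat.card_sigma]
  exact congrArg _ <| Nat.card_congr <|
    Equiv.subtypeProdEquivSigmaSubtype fun (k : ι) (m : σ →₀ ℕ) => m.degree + e k = n

theorem mk_finrank_mul_one_sub_X_pow (hX : ∀ j, algebraMap (MvPolynomial σ K) A (.X j) ∈ 𝒜 1)
    (hb : ∀ k, b k ∈ 𝒜 (e k)) :
    (PowerSeries.mk fun n => (Module.finrank K (𝒜 n) : ℤ)) *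
      (1 - PowerSeries.X) ^ Fintype.card σ = ∑ k, PowerSeries.X ^ e k := by
  rw [mk_finrank_eq_sum_X_pow_mul hX hb, ← Finset.sum_mul, mul_assoc, ← mul_pow,
    mk_one_mul_one_sub_eq_one, one_pow, mul_one]

theorem le_natDegree_of_coe_eq_sum_X_pow {h : Polynomial ℤ}
    (hh : (h : ℤ⟦X⟧) = ∑ k, PowerSeries.X ^ e k) (k : ι) : e k ≤ h.natDegree := by
  refine Polynomial.le_natDegree_of_ne_zero ?_
  rw [← Polynomial.coeff_coe, hh, map_sum]
  simp_rw [PowerSeries.coeff_X_pow]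
  rw [Finset.sum_boole, Nat.cast_ne_zero, Finset.card_ne_zero]
  exact ⟨k, by simp⟩

end HilbertSeries

section Veronese

open MvPolynomial

variable {K A : Type*} [CommRing K] [CommRing A] [Algebra K A]
  {𝒜 : ℕ → Submodule K A} [GradedAlgebra 𝒜] {d : ℕ} {θ : Fin d → A}

theorem mem_veroneseLsopIdealComponent_iff {r : ℕ} (hθ : ∀ j, θ j ^ r ∈ 𝒜 r) (hr : 0 < r) {i : ℕ}
    {x : A} (hx : x ∈ 𝒜 (i * r)) :
    x ∈ veroneseLsopIdealComponent K 𝒜 θ r i ↔ x ∈ Ideal.span (Set.range fun j => θ j ^ r) := by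
  cases i with
  | zero =>
    refine ⟨fun h => (Submodule.mem_bot K).1 h ▸ Ideal.zero_mem _, fun h => ?_⟩
    rw [zero_mul] at hx
    exact (Submodule.mem_bot K).2 <| by
      rw [← DirectSum.decompose_of_mem_same 𝒜 hx, decompose_eq_zero_of_mem_span hθ hr h]
  | succ i =>
    refine ⟨fun h => ?_, fun h => ?_⟩
    · have hle : veroneseLsopIdealComponent K 𝒜 θ r (i + 1) ≤
          (Ideal.span (Set.range fun j => θ j ^ r)).restrictScalars K := by
        refine iSup_le fun j => ?_
        rintro _ ⟨y, -, rfl⟩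
        exact Ideal.mul_mem_right _ _ (Ideal.subset_span ⟨j, rfl⟩)
      exact hle h
    · rw [add_one_mul] at hx
      obtain ⟨c, hc, hxc⟩ := exists_sum_mul_of_mem_span (n := i * r) hθ h
      rw [← DirectSum.decompose_of_mem_same 𝒜 hx, hxc]
      exact Submodule.sum_mem _ fun j _ => Submodule.mem_iSup_of_mem j ⟨c j, hc j, rfl⟩

theorem sum_pow_mem (hθ1 : ∀ j, θ j ∈ 𝒜 1) (n : ℕ) : (∑ j, θ j) ^ n ∈ 𝒜 n := by
  simpa using SetLike.pow_mem_graded n (Submodule.sum_mem (𝒜 1) (t := Finset.univ) fun j _ => hθ1 j)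

variable {ι : Type*} [Algebra (MvPolynomial (Fin d) K) A]
  {b : Module.Basis ι (MvPolynomial (Fin d) K) A} {e : ι → ℕ}

theorem mem_veroneseLsopIdealComponent_iff_repr
    (hX : ∀ j, algebraMap (MvPolynomial (Fin d) K) A (X j) = θ j) (hθ1 : ∀ j, θ j ∈ 𝒜 1)
    {r i : ℕ} (hr : 0 < r) {x : A} (hx : x ∈ 𝒜 (i * r)) :
    x ∈ veroneseLsopIdealComponent K 𝒜 θ r i ↔
      ∀ k, b.repr x k ∈ varPowIdeal (Fin d) K r := by
  have hθr (j : Fin d) : θ j ^ r ∈ 𝒜 r := by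
    simpa using SetLike.pow_mem_graded r (hθ1 j)
  have hmap : (varPowIdeal (Fin d) K r).map (algebraMap (MvPolynomial (Fin d) K) A) =
      Ideal.span (Set.range fun j => θ j ^ r) := by
    rw [varPowIdeal, Ideal.map_span, ← Set.range_comp]
    simp only [Function.comp_def, map_pow, hX]
  rw [mem_veroneseLsopIdealComponent_iff hθr hr hx, ← hmap, mem_map_algebraMap_iff_repr b]

theorem sub_one_mul_le_of_not_le_veroneseLsopIdealComponent
    [IsScalarTower K (MvPolynomial (Fin d) K) A]
    (hX : ∀ j, algebraMap (MvPolynomial (Fin d) K) A (X j) = θ j) (hθ1 : ∀ j, θ j ∈ 𝒜 1)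
    (hb : ∀ k, b k ∈ 𝒜 (e k)) {s τ : ℕ} (he : ∀ k, e k ≤ s + 1)
    (hτ : ¬ 𝒜 (τ * (s + 1)) ≤ veroneseLsopIdealComponent K 𝒜 θ (s + 1) τ) :
    (τ - 1) * (s + 1) ≤ d * s := by
  contrapose! hτ
  intro x hx
  refine (mem_veroneseLsopIdealComponent_iff_repr (b := b) hX hθ1 s.succ_pos hx).2 fun k =>
    mem_varPowIdeal_of_card_mul_lt_degree fun m hm => ?_
  have hdeg := degree_add_eq_of_mem_support_repr (fun j => hX j ▸ hθ1 j) hb hx hm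
  rw [Nat.sub_one_mul] at hτ
  have := he k
  rw [Fintype.card_fin]
  omega

theorem mem_veroneseLsopIdealComponent_of_pow_mul_mem
    {K : Type*} [Field K] [CharZero K] [Algebra K A]
    {𝒜 : ℕ → Submodule K A} [GradedAlgebra 𝒜] [Algebra (MvPolynomial (Fin d) K) A]
    [IsScalarTower K (MvPolynomial (Fin d) K) A] {b : Module.Basis ι (MvPolynomial (Fin d) K) A}
    (hX : ∀ j, algebraMap (MvPolynomial (Fin d) K) A (X j) = θ j) (hθ1 : ∀ j, θ j ∈ 𝒜 1)
    (hb : ∀ k, b k ∈ 𝒜 (e k)) {s c i : ℕ} (hc : c * (s + 1) ≤ d * s) (hi : 2 * i ≤ c) {x : A}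
    (hx : x ∈ 𝒜 (i * (s + 1)))
    (h : ((∑ j, θ j) ^ (s + 1)) ^ (c - 2 * i) * x ∈
      veroneseLsopIdealComponent K 𝒜 θ (s + 1) (c - i)) :
    x ∈ veroneseLsopIdealComponent K 𝒜 θ (s + 1) i := by
  obtain ⟨t, rfl⟩ := Nat.exists_eq_add_of_le hi
  rw [Nat.add_sub_cancel_left] at h
  have hsum : ∑ j, θ j = algebraMap (MvPolynomial (Fin d) K) A (sumX (Fin d) K) := by
    rw [sumX, map_sum, Finset.sum_congr rfl fun j _ => hX j]
  have hmem : ((∑ j, θ j) ^ (s + 1)) ^ t * x ∈ 𝒜 ((2 * i + t - i) * (s + 1)) := by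
    have hdeg : (2 * i + t - i) * (s + 1) = (s + 1) * t + i * (s + 1) := by
      rw [two_mul, add_assoc, Nat.add_sub_cancel_left]
      ring
    rw [hdeg, ← pow_mul]
    exact SetLike.mul_mem_graded (sum_pow_mem hθ1 _) hx
  rw [mem_veroneseLsopIdealComponent_iff_repr (b := b) hX hθ1 s.succ_pos hmem, hsum, ← map_pow,
    ← map_pow, ← Algebra.smul_def, map_smul, ← pow_mul] at h
  rw [mem_veroneseLsopIdealComponent_iff_repr (b := b) hX hθ1 s.succ_pos hx]
  intro k
  refine mem_varPowIdeal_of_sumX_pow_mul_mem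
    (isHomogeneous_repr (fun j => hX j ▸ hθ1 j) hb hx k) ?_ (h k)
  rw [Fintype.card_fin]
  have : (2 * i + t) * (s + 1) = 2 * (i * (s + 1)) + (s + 1) * t := by ring
  omega

end Veronese

end VeroneseLefschetz

open VeroneseLefschetz in
theorem veronese_almost_strong_Lefschetz_general
    {K A : Type*} [Field K] [CharZero K] [CommRing A] [Algebra K A]
    (𝒜 : ℕ → Submodule K A) [GradedAlgebra 𝒜]
    {d : ℕ} (θ : Fin d → A) (hθ1 : ∀ j, θ j ∈ 𝒜 1)
    (hθreg : RingTheory.Sequence.IsWeaklyRegular A (List.ofFn θ))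
    (hθfin : Module.Finite K (A ⧸ Ideal.span (Set.range θ)))
    (h : Polynomial ℤ)
    (hh : (h : PowerSeries ℤ) =
      (PowerSeries.mk fun i => (Module.finrank K (𝒜 i) : ℤ)) * (1 - PowerSeries.X) ^ d)
    {r : ℕ} (hr : 1 ≤ r) (hrdeg : h.natDegree ≤ r) {σ : ℕ}
    (hσtop : ¬ 𝒜 (σ * r) ≤ veroneseLsopIdealComponent K 𝒜 θ r σ) :
    ∃ w ∈ 𝒜 r, ∀ i : ℕ, 2 * i + 1 ≤ σ - 1 →
      ∀ x ∈ 𝒜 (i * r),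
        w ^ (σ - 1 - 2 * i) * x ∈ veroneseLsopIdealComponent K 𝒜 θ r (σ - 1 - i) →
          x ∈ veroneseLsopIdealComponent K 𝒜 θ r i := by
  let := (MvPolynomial.aeval (R := K) θ).toRingHom.toAlgebra
  have : IsScalarTower K (MvPolynomial (Fin d) K) A :=
    .of_algebraMap_eq fun c => (MvPolynomial.aeval_C θ c).symm
  have hX (j : Fin d) : algebraMap (MvPolynomial (Fin d) K) A (.X j) = θ j :=
    MvPolynomial.aeval_X θ j
  have hX1 (j : Fin d) : algebraMap (MvPolynomial (Fin d) K) A (.X j) ∈ 𝒜 1 := hX j ▸ hθ1 j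
  obtain ⟨ι, _, b, hhom⟩ := exists_homogeneous_basis hX hθ1 hθreg
  choose e hb using hhom
  have := Fintype.ofFinite ι
  have hsum : (h : PowerSeries ℤ) = ∑ k, PowerSeries.X ^ e k := by
    rw [hh, ← mk_finrank_mul_one_sub_X_pow hX1 hb, Fintype.card_fin]
  obtain ⟨s, rfl⟩ := Nat.exists_eq_add_of_le' hr
  have he (k : ι) : e k ≤ s + 1 := (le_natDegree_of_coe_eq_sum_X_pow hsum k).trans hrdeg
  have hσ := sub_one_mul_le_of_not_le_veroneseLsopIdealComponent hX hθ1 hb he hσtop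
  exact ⟨_, sum_pow_mem hθ1 _, fun i hi x hx =>
    mem_veroneseLsopIdealComponent_of_pow_mul_mem hX hθ1 hb hσ (Nat.le_of_succ_le hi) hx⟩

/-- **Theorem 1.1 (second part), Kubitzke–Murai.**
If moreover `r ≥ deg h_A(t)`, then `A_Θ^⟨r⟩` is almost strong Lefschetz: writing
`A_Θ^⟨r⟩ = ⊕_{i=0}^σ (A_Θ^⟨r⟩)_i` with `(A_Θ^⟨r⟩)_σ ≠ 0` (the degree-`i` component being
`𝒜 (i*r) ⧸ veroneseLsopIdealComponent K 𝒜 θ r i`), the algebra `A_Θ^⟨r⟩` has the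
`(σ-1)`-Lefschetz property: there is a linear form `w` (represented by an element of
`𝒜 r = (A^⟨r⟩)_1`) such that multiplication by `w^(σ-1-2i)` is injective from the degree-`i`
to the degree-`(σ-1-i)` component for `0 ≤ i ≤ ⌊(σ-2)/2⌋`. -/
theorem veronese_almost_strong_Lefschetz
    (K : Type*) [Field K] [CharZero K]
    (A : Type*) [CommRing A] [Algebra K A]
    (𝒜 : ℕ → Submodule K A) [GradedAlgebra 𝒜]
    (hstd : ∀ i, 𝒜 i = 𝒜 1 ^ i)
    (hfin : ∀ i, Module.Finite K (𝒜 i))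
    (d : ℕ) (hdim : ringKrullDim A = d)
    (hCM : ∀ θ' : Fin d → A, (∀ j, θ' j ∈ 𝒜 1) →
      Module.Finite K (A ⧸ Ideal.span (Set.range θ')) →
      RingTheory.Sequence.IsRegular A (List.ofFn θ'))
    (θ : Fin d → A) (hθ1 : ∀ j, θ j ∈ 𝒜 1)
    (hθlsop : Module.Finite K (A ⧸ Ideal.span (Set.range θ)))
    (h : Polynomial ℤ)
    (hh : (h : PowerSeries ℤ) =
      (PowerSeries.mk fun i => (Module.finrank K (𝒜 i) : ℤ)) * (1 - PowerSeries.X) ^ d)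
    (r : ℕ) (hr : 1 ≤ r) (hrdeg : h.natDegree ≤ r)
    (σ : ℕ)
    (hσtop : ¬ 𝒜 (σ * r) ≤ veroneseLsopIdealComponent K 𝒜 θ r σ)
    (hσvanish : ∀ i, σ < i → 𝒜 (i * r) ≤ veroneseLsopIdealComponent K 𝒜 θ r i) :
    ∃ w ∈ 𝒜 r, ∀ i : ℕ, 2 * i + 1 ≤ σ - 1 →
      ∀ x ∈ 𝒜 (i * r),
        w ^ (σ - 1 - 2 * i) * x ∈ veroneseLsopIdealComponent K 𝒜 θ r (σ - 1 - i) →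
          x ∈ veroneseLsopIdealComponent K 𝒜 θ r i := by
  exact veronese_almost_strong_Lefschetz_general 𝒜 θ hθ1
    (hCM θ hθ1 hθlsop).toIsWeaklyRegular hθlsop h hh hr hrdeg hσtop
end
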